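/- Let N ≥ 2. Let a : [0,1] → ℝ be continuously differentiable, nondecreasing, nonconstant, with a(0) > 0. Let f : [0,∞) → ℝ be continuously differentiable and nondecreasing with f(0) = 0, f'(0) = 0, and liminf_{s→+∞} f(s)/s > 1/a(0). Then there exists a function u : [0,1] → ℝ that is continuously differentiable on [0,1], twice differentiable on (0,1), satisfies u'(0) = u'(1) = 0, u(r) > 0 for all r ∈ [0,1], u is nondecreasing on [0,1], u is nonconstant, and −u''(r) − ((N−1)/r)·u'(r) + u(r) = a(r)·f(u(r)) for all r ∈ (0,1). -/

import Mathlib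

open Set Filter

open scoped NNReal Topology BoundedContinuousFunction

/-!
Shoot from the centre with `u(0) = d`. Integrating the equation once shows that `u'(r) / r` is a
weighted mean of `u - a f(u)` over the ball of radius `r`, so the singularity at `r = 0` disappears.
For small `d` this slope is positive on all of `[0, R]`, because `f` is sublinear at `0`; when
`d ≤ a(0) f(d)` it is nonpositive at `r = 0`. For an intermediate `d` the slope is nonnegative and
vanishes somewhere, and a strong maximum principle for `u'` moves the zero to the boundary. As long
as the slope is nonnegative, `u(r) ≤ u(0) exp(R r)`, so `f` may be truncated and taken globally
Lipschitz. A constant solution would force `a` to be constant.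
-/

section RadialMean

variable {n : ℕ} {g h : ℝ → ℝ} {r r₀ R C : ℝ}

/-- The weighted mean `∫₀¹ tⁿ g(r t) dt = r⁻⁽ⁿ⁺¹⁾ ∫₀ʳ sⁿ g(s) ds` of `g` over the ball of radius `r`
in dimension `n + 1`, not normalised: the mean of `1` is `1 / (n + 1)`. The first integral
is used because it makes sense at `r = 0`. -/
noncomputable def radialMean (n : ℕ) (g : ℝ → ℝ) (r : ℝ) : ℝ :=
  ∫ t in (0 : ℝ)..1, t ^ n * g (r * t)

theorem continuous_uncurry_radialMean (n : ℕ) {X : Type*} [TopologicalSpace X]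
    [FirstCountableTopology X] {g : X → ℝ → ℝ} (hg : Continuous (Function.uncurry g)) :
    Continuous (Function.uncurry fun x => radialMean n (g x)) := by
  have hcomp : Continuous fun p : (X × ℝ) × ℝ => g p.1.1 (p.1.2 * p.2) :=
    hg.comp (by fun_prop : Continuous fun p : (X × ℝ) × ℝ => (p.1.1, p.1.2 * p.2))
  refine intervalIntegral.continuous_parametric_intervalIntegral_of_continuous'
    (f := fun (p : X × ℝ) t => t ^ n * g p.1 (p.2 * t)) ?_ 0 1
  exact (continuous_snd.pow n).mul hcomp

theorem continuous_radialMean (n : ℕ) (hg : Continuous g) : Continuous (radialMean n g) :=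
  (continuous_uncurry_radialMean (X := Unit) n (g := fun _ => g) (hg.comp continuous_snd)).comp
    (continuous_const.prodMk continuous_id : Continuous fun r => ((), r))

theorem intervalIntegrable_radialMean (n : ℕ) (hg : Continuous g) (r : ℝ) :
    IntervalIntegrable (fun t => t ^ n * g (r * t)) MeasureTheory.volume 0 1 :=
  Continuous.intervalIntegrable (by fun_prop) _ _

theorem radialMean_sub (hg : Continuous g) (hh : Continuous h) :
    radialMean n (g - h) r = radialMean n g r - radialMean n h r := by
  simp only [radialMean, Pi.sub_apply, mul_sub]
  exact intervalIntegral.integral_sub (intervalIntegrable_radialMean n hg r)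
    (intervalIntegrable_radialMean n hh r)

theorem radialMean_const (n : ℕ) (c r : ℝ) : radialMean n (fun _ => c) r = c / (n + 1) := by
  simp only [radialMean, intervalIntegral.integral_mul_const, integral_pow]
  ring

theorem radialMean_zero (n : ℕ) (g : ℝ → ℝ) : radialMean n g 0 = g 0 / (n + 1) := by
  rw [← radialMean_const n (g 0) 0]
  simp only [radialMean, zero_mul]

theorem radialMean_mono (hg : Continuous g) (hh : Continuous h)
    (hgh : ∀ t ∈ Icc (0 : ℝ) 1, g (r * t) ≤ h (r * t)) : radialMean n g r ≤ radialMean n h r :=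
  intervalIntegral.integral_mono_on zero_le_one (intervalIntegrable_radialMean n hg r)
    (intervalIntegrable_radialMean n hh r) fun t ht =>
      mul_le_mul_of_nonneg_left (hgh t ht) (pow_nonneg ht.1 n)

theorem abs_radialMean_le_radialMean (hh : Continuous h)
    (hgh : ∀ t ∈ Icc (0 : ℝ) 1, |g (r * t)| ≤ h (r * t)) :
    |radialMean n g r| ≤ radialMean n h r := by
  refine intervalIntegral.norm_integral_le_of_norm_le (E := ℝ) zero_le_one
    (Eventually.of_forall fun t ht => ?_) (intervalIntegrable_radialMean n hh r)
  rw [Real.norm_eq_abs, abs_mul, abs_of_nonneg (pow_nonneg ht.1.le n)]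
  exact mul_le_mul_of_nonneg_left (hgh t (Ioc_subset_Icc_self ht)) (pow_nonneg ht.1.le n)

theorem radialMean_const_le (n : ℕ) (hC : 0 ≤ C) (r : ℝ) : radialMean n (fun _ => C) r ≤ C := by
  rw [radialMean_const]
  exact div_le_self hC (le_add_of_nonneg_left n.cast_nonneg)

theorem radialMean_le (n : ℕ) (hg : Continuous g) (hC : 0 ≤ C)
    (hgC : ∀ t ∈ Icc (0 : ℝ) 1, g (r * t) ≤ C) : radialMean n g r ≤ C :=
  (radialMean_mono hg continuous_const hgC).trans (radialMean_const_le n hC r)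

theorem abs_radialMean_le (n : ℕ) (hC : 0 ≤ C) (hgC : ∀ t ∈ Icc (0 : ℝ) 1, |g (r * t)| ≤ C) :
    |radialMean n g r| ≤ C :=
  (abs_radialMean_le_radialMean continuous_const hgC).trans (radialMean_const_le n hC r)

theorem radialMean_pos (n : ℕ) (hg : Continuous g) (hpos : ∀ t ∈ Ioo (0 : ℝ) 1, 0 < g (r * t)) :
    0 < radialMean n g r :=
  intervalIntegral.intervalIntegral_pos_of_pos_on (intervalIntegrable_radialMean n hg r)
    (fun t ht => mul_pos (pow_pos ht.1 n) (hpos t ht)) one_pos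

theorem pow_mul_radialMean (n : ℕ) (g : ℝ → ℝ) (r : ℝ) :
    r ^ (n + 1) * radialMean n g r = ∫ s in (0 : ℝ)..r, s ^ n * g s := by
  have hsubst : r * ∫ t in (0 : ℝ)..1, (r * t) ^ n * g (r * t) =
      ∫ s in (0 : ℝ)..r, s ^ n * g s := by
    simpa only [mul_zero, mul_one] using intervalIntegral.mul_integral_comp_mul_left
      (a := 0) (b := 1) (f := fun s => s ^ n * g s) r
  simp only [← hsubst, mul_pow, mul_assoc, intervalIntegral.integral_const_mul, radialMean,
    pow_succ']

theorem hasDerivAt_pow_mul_radialMean (n : ℕ) (hg : Continuous g) (r : ℝ) :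
    HasDerivAt (fun r => r ^ (n + 1) * radialMean n g r) (r ^ n * g r) r := by
  simp only [pow_mul_radialMean]
  exact (((continuous_pow n).mul hg).integral_hasStrictDerivAt 0 r).hasDerivAt

/-- If `u' = r * radialMean n g r`, this says `u'' = g - (n / r) u'`. -/
theorem hasDerivAt_mul_radialMean (n : ℕ) (hg : Continuous g) (hr : r ≠ 0) :
    HasDerivAt (fun r => r * radialMean n g r) (g r - n / r * (r * radialMean n g r)) r := by
  have hquot := (hasDerivAt_pow_mul_radialMean n hg r).div (hasDerivAt_pow n r) (pow_ne_zero n hr)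
  have heq : (fun s => s * radialMean n g s) =ᶠ[𝓝 r]
      (fun s => s ^ (n + 1) * radialMean n g s) / fun s => s ^ n := by
    filter_upwards [isOpen_ne.mem_nhds hr] with s hs
    rw [Pi.div_apply, eq_div_iff (pow_ne_zero n hs)]
    ring
  refine (hquot.congr_of_eventuallyEq heq).congr_deriv ?_
  rcases n with _ | n
  · simp
  · rw [Nat.add_sub_cancel]
    field_simp
    ring

/-- At an interior zero of a nonnegative mean, the flux `r ^ (n + 1) * radialMean n g r` has a local
minimum, so its derivative `r ^ n * g r` vanishes. -/
theorem eq_zero_of_radialMean_eq_zero (hg : Continuous g)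
    (hnn : ∀ r ∈ Ioo 0 R, 0 ≤ radialMean n g r) (hr₀ : r₀ ∈ Ico 0 R)
    (hzero : radialMean n g r₀ = 0) : g r₀ = 0 := by
  rcases hr₀.1.eq_or_lt with rfl | hpos
  · rw [radialMean_zero] at hzero
    exact (div_eq_zero_iff.1 hzero).resolve_right (by positivity)
  · have hmin : IsLocalMin (fun r => r ^ (n + 1) * radialMean n g r) r₀ := by
      filter_upwards [Ioo_mem_nhds hpos hr₀.2] with r hr
      rw [hzero, mul_zero]
      exact mul_nonneg (pow_nonneg hr.1.le _) (hnn r hr)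
    have hderiv := hmin.hasDerivAt_eq_zero (hasDerivAt_pow_mul_radialMean n hg r₀)
    exact (mul_eq_zero.1 hderiv).resolve_left (pow_pos hpos n).ne'

theorem mul_radialMean_le_of_radialMean_eq_zero (hg : Continuous g) (hr₀ : 0 ≤ r₀) (hr : r₀ ≤ r)
    (hzero : radialMean n g r₀ = 0) (hC : 0 ≤ C) (hgC : ∀ s ∈ Icc r₀ r, g s ≤ C) :
    r * radialMean n g r ≤ (r - r₀) * C := by
  rcases (hr₀.trans hr).eq_or_lt with rfl | hpos
  · simp [le_antisymm hr hr₀]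
  have hint : ∀ p q : ℝ, IntervalIntegrable (fun s => s ^ n * g s) MeasureTheory.volume p q :=
    fun p q => ((continuous_pow n).mul hg).intervalIntegrable p q
  have hflux : r ^ (n + 1) * radialMean n g r = ∫ s in r₀..r, s ^ n * g s := by
    rw [pow_mul_radialMean, ← intervalIntegral.integral_add_adjacent_intervals (hint 0 r₀)
      (hint r₀ r), ← pow_mul_radialMean, hzero, mul_zero, zero_add]
  have hle : ∫ s in r₀..r, s ^ n * g s ≤ ∫ _ in r₀..r, r ^ n * C :=
    intervalIntegral.integral_mono_on hr (hint _ _) (by simp) fun s hs => by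
      have hs0 : 0 ≤ s := hr₀.trans hs.1
      calc s ^ n * g s ≤ s ^ n * C := mul_le_mul_of_nonneg_left (hgC s hs) (pow_nonneg hs0 n)
        _ ≤ r ^ n * C := mul_le_mul_of_nonneg_right (pow_le_pow_left₀ hs0 hs.2 n) hC
  rw [intervalIntegral.integral_const, smul_eq_mul, ← hflux] at hle
  refine le_of_mul_le_mul_left ?_ (pow_pos hpos n)
  calc r ^ n * (r * radialMean n g r) = r ^ (n + 1) * radialMean n g r := by ring
    _ ≤ (r - r₀) * (r ^ n * C) := hle
    _ = r ^ n * ((r - r₀) * C) := by ring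

end RadialMean

section RadialPotential

variable {n : ℕ} {g h : ℝ → ℝ} {C L : ℝ}

/-- The solution `u` of `u'' + (n / r) u' = g` with `u(0) = u'(0) = 0`. -/
noncomputable def radialPotential (n : ℕ) (g : ℝ → ℝ) (r : ℝ) : ℝ :=
  ∫ s in (0 : ℝ)..r, s * radialMean n g s

theorem hasDerivAt_radialPotential (hg : Continuous g) (r : ℝ) :
    HasDerivAt (radialPotential n g) (r * radialMean n g r) r :=
  ((continuous_id.mul (continuous_radialMean n hg)).integral_hasStrictDerivAt 0 r).hasDerivAt

theorem continuous_radialPotential (hg : Continuous g) : Continuous (radialPotential n g) :=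
  continuous_iff_continuousAt.2 fun r => (hasDerivAt_radialPotential hg r).continuousAt

theorem radialPotential_zero (n : ℕ) (g : ℝ → ℝ) : radialPotential n g 0 = 0 :=
  intervalIntegral.integral_same

theorem radialPotential_sub (hg : Continuous g) (hh : Continuous h) (r : ℝ) :
    radialPotential n (g - h) r = radialPotential n g r - radialPotential n h r := by
  simp only [radialPotential, radialMean_sub hg hh, mul_sub]
  exact intervalIntegral.integral_sub
    ((continuous_id.mul (continuous_radialMean n hg)).intervalIntegrable _ _)
    ((continuous_id.mul (continuous_radialMean n hh)).intervalIntegrable _ _)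

theorem integral_mul_exp_sq (L r : ℝ) :
    ∫ s in (0 : ℝ)..r, s * (L * Real.exp (L * s ^ 2)) = (Real.exp (L * r ^ 2) - 1) / 2 := by
  have hprim : ∀ s ∈ uIcc 0 r, HasDerivAt (fun s => Real.exp (L * s ^ 2) / 2)
      (s * (L * Real.exp (L * s ^ 2))) s := fun s _ =>
    (((hasDerivAt_pow 2 s).const_mul L).exp.div_const 2).congr_deriv (by push_cast; ring)
  rw [intervalIntegral.integral_eq_sub_of_hasDerivAt hprim
    (Continuous.intervalIntegrable (by fun_prop) _ _)]
  simp only [ne_eq, OfNat.ofNat_ne_zero, not_false_eq_true, zero_pow, mul_zero, Real.exp_zero]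
  ring

/-- The factor `1 / 2` gained here is what makes the Picard operator of a radial equation
a contraction for the weight `exp (L r²)`. -/
theorem abs_radialPotential_le (hL : 0 ≤ L) (hC : 0 ≤ C)
    (hgC : ∀ s, |g s| ≤ L * (Real.exp (L * s ^ 2) * C)) (r : ℝ) :
    |radialPotential n g r| ≤ C / 2 * Real.exp (L * r ^ 2) := by
  have hmean (s : ℝ) : |radialMean n g s| ≤ L * (Real.exp (L * s ^ 2) * C) :=
    abs_radialMean_le n (by positivity) fun t ht => (hgC _).trans <| by
      have : (s * t) ^ 2 ≤ s ^ 2 := by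
        rw [mul_pow]
        exact mul_le_of_le_one_right (sq_nonneg s) (pow_le_one₀ ht.1 ht.2)
      gcongr
  have hsq (m : ℝ → ℝ) : ∫ s in (0 : ℝ)..r, s * m s = r ^ 2 * radialMean 1 m r := by
    simpa using (pow_mul_radialMean 1 m r).symm
  calc |radialPotential n g r| = r ^ 2 * |radialMean 1 (radialMean n g) r| := by
        rw [radialPotential, hsq, abs_mul, abs_sq]
    _ ≤ r ^ 2 * radialMean 1 (fun s => L * (Real.exp (L * s ^ 2) * C)) r := by
        gcongr
        exact abs_radialMean_le_radialMean (by fun_prop) fun t _ => hmean _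
    _ = C * ∫ s in (0 : ℝ)..r, s * (L * Real.exp (L * s ^ 2)) := by
        rw [← hsq, ← intervalIntegral.integral_const_mul]
        congr 1 with s
        ring
    _ ≤ C / 2 * Real.exp (L * r ^ 2) := by
        rw [integral_mul_exp_sq]
        linarith

end RadialPotential

/-- `u` solves `u'' + (n / r) u' = G r u` with `u'(0) = 0`, in the integrated form which absorbs the
singular term: `u'(r) / r` is the `radialMean` of the right-hand side. The equation is imposed on
all of `ℝ`, since right-hand sides given on an interval are extended to `ℝ` anyway. -/
def IsRadialSolution (n : ℕ) (G : ℝ → ℝ → ℝ) (u : ℝ → ℝ) : Prop :=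
  ∀ r, HasDerivAt u (r * radialMean n (fun s => G s (u s)) r) r

/-- The quotient `u'(r) / r` of a radial solution, which is also defined at `r = 0`. -/
noncomputable abbrev radialSlope (n : ℕ) (G : ℝ → ℝ → ℝ) (u : ℝ → ℝ) : ℝ → ℝ :=
  radialMean n fun s => G s (u s)

section InitialValueProblem

variable {n : ℕ} {G : ℝ → ℝ → ℝ} {L : ℝ≥0}

/-- The Picard operator of the radial initial value problem with `u(0) = d`, written for
`y = exp (-L r²) u`; the weight makes it a contraction on the whole line. -/
noncomputable def weightedPicard (n : ℕ) (G : ℝ → ℝ → ℝ) (L : ℝ≥0) (d : ℝ) (y : ℝ →ᵇ ℝ) (r : ℝ) :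
    ℝ :=
  Real.exp (-(L * r ^ 2)) * (d + radialPotential n (fun s => G s (Real.exp (L * s ^ 2) * y s)) r)

theorem continuous_comp_exp_mul (L : ℝ) (hG : Continuous (Function.uncurry G)) (y : ℝ →ᵇ ℝ) :
    Continuous fun s => G s (Real.exp (L * s ^ 2) * y s) :=
  hG.comp (by fun_prop : Continuous fun s => (s, Real.exp (L * s ^ 2) * y s))

theorem continuous_weightedPicard (n : ℕ) (L : ℝ≥0) (hG : Continuous (Function.uncurry G)) (d : ℝ)
    (y : ℝ →ᵇ ℝ) : Continuous (weightedPicard n G L d y) := by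
  have hpot := continuous_radialPotential (n := n) (continuous_comp_exp_mul L hG y)
  unfold weightedPicard
  fun_prop

theorem weightedPicard_zero (n : ℕ) (L : ℝ≥0) (hG0 : ∀ s, G s 0 = 0) (r : ℝ) :
    weightedPicard n G L 0 0 r = 0 := by
  simp [weightedPicard, radialPotential, radialMean, hG0]

theorem abs_weightedPicard_sub_le (n : ℕ) (hG : Continuous (Function.uncurry G))
    (hGL : ∀ s, LipschitzWith L (G s)) (d e : ℝ) (y z : ℝ →ᵇ ℝ) (r : ℝ) :
    |weightedPicard n G L d y r - weightedPicard n G L e z r| ≤ |d - e| + dist y z / 2 := by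
  have hsource (s : ℝ) : |G s (Real.exp (L * s ^ 2) * y s) - G s (Real.exp (L * s ^ 2) * z s)| ≤
      L * (Real.exp (L * s ^ 2) * dist y z) := by
    refine ((hGL s).dist_le_mul _ _).trans (mul_le_mul_of_nonneg_left ?_ L.2)
    rw [Real.dist_eq, ← mul_sub, abs_mul, Real.abs_exp, ← Real.dist_eq]
    exact mul_le_mul_of_nonneg_left (BoundedContinuousFunction.dist_coe_le_dist s)
      (Real.exp_pos _).le
  have hpot := abs_radialPotential_le (n := n) L.2 dist_nonneg hsource r
  rw [weightedPicard, weightedPicard, ← mul_sub, abs_mul, Real.abs_exp, Real.exp_neg,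
    inv_mul_le_iff₀ (Real.exp_pos _), add_sub_add_comm, ← radialPotential_sub
      (continuous_comp_exp_mul L hG y) (continuous_comp_exp_mul L hG z)]
  have hexp : 1 ≤ Real.exp (L * r ^ 2) := Real.one_le_exp (by positivity)
  refine (abs_add_le _ _).trans ?_
  calc _ ≤ |d - e| + dist y z / 2 * Real.exp (L * r ^ 2) := add_le_add_right hpot _
    _ ≤ Real.exp (L * r ^ 2) * |d - e| + dist y z / 2 * Real.exp (L * r ^ 2) := by
        gcongr
        exact le_mul_of_one_le_left (abs_nonneg _) hexp
    _ = Real.exp (L * r ^ 2) * (|d - e| + dist y z / 2) := by ring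

theorem exists_continuous_weightedPicard_fixedPoint (n : ℕ) (hG : Continuous (Function.uncurry G))
    (hGL : ∀ s, LipschitzWith L (G s)) (hG0 : ∀ s, G s 0 = 0) :
    ∃ Y : ℝ → ℝ →ᵇ ℝ, Continuous Y ∧ ∀ d r, weightedPicard n G L d (Y d) r = Y d r := by
  have hle := abs_weightedPicard_sub_le (L := L) n hG hGL
  let T (d : ℝ) (y : ℝ →ᵇ ℝ) : ℝ →ᵇ ℝ := .ofNormedAddCommGroup (weightedPicard n G L d y)
    (continuous_weightedPicard n L hG d y) (|d - 0| + dist y 0 / 2) fun r => by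
      simpa only [weightedPicard_zero n L hG0, sub_zero, Real.norm_eq_abs] using hle d 0 y 0 r
  have hT (d : ℝ) : ContractingWith (1 / 2) (T d) := by
    refine ⟨by norm_num, LipschitzWith.of_dist_le_mul fun y z => ?_⟩
    refine (BoundedContinuousFunction.dist_le (by positivity)).2 fun r => ?_
    exact (hle d d y z r).trans_eq (by simp [div_eq_inv_mul])
  have hTd (d e : ℝ) (y : ℝ →ᵇ ℝ) : dist (T d y) (T e y) ≤ dist d e := by
    refine (BoundedContinuousFunction.dist_le dist_nonneg).2 fun r => ?_
    exact (hle d e y y r).trans_eq (by simp [Real.dist_eq])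
  refine ⟨fun d => (hT d).fixedPoint, ?_, fun d r => ?_⟩
  · refine (LipschitzWith.of_dist_le_mul (K := 2) fun d e => ?_).continuous
    refine ((hT d).fixedPoint_lipschitz_in_map (hT e) (hTd d e)).trans_eq ?_
    norm_num [div_eq_mul_inv, mul_comm]
  · exact DFunLike.congr_fun (hT d).fixedPoint_isFixedPt r

theorem exists_continuous_isRadialSolution (n : ℕ) (hG : Continuous (Function.uncurry G))
    (hGL : ∀ s, LipschitzWith L (G s)) (hG0 : ∀ s, G s 0 = 0) :
    ∃ U : ℝ → ℝ → ℝ, Continuous (Function.uncurry U) ∧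
      ∀ d, IsRadialSolution n G (U d) ∧ U d 0 = d := by
  obtain ⟨Y, hYc, hY⟩ := exists_continuous_weightedPicard_fixedPoint n hG hGL hG0
  let U (d r : ℝ) : ℝ := Real.exp (L * r ^ 2) * Y d r
  have hU (d : ℝ) : U d = fun r => d + radialPotential n (fun s => G s (U d s)) r := by
    funext r
    simp only [U]
    rw [← hY d r, weightedPicard, ← mul_assoc, ← Real.exp_add, add_neg_cancel, Real.exp_zero,
      one_mul]
  refine ⟨U, by simp only [U, Function.uncurry_def]; fun_prop, fun d => ⟨fun r => ?_, ?_⟩⟩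
  · have hderiv := (hasDerivAt_radialPotential (n := n) (continuous_comp_exp_mul L hG (Y d))
      r).const_add d
    exact hderiv.congr_of_eventuallyEq (Eventually.of_forall fun s => congrFun (hU d) s)
  · simpa only [radialPotential_zero, add_zero] using congrFun (hU d) 0

end InitialValueProblem

theorem le_mul_exp_of_deriv_le {φ φ' : ℝ → ℝ} {c p q : ℝ} (hφ : ∀ s, HasDerivAt φ (φ' s) s)
    (hle : ∀ s ∈ Ico p q, φ' s ≤ c * φ s) : ∀ r ∈ Icc p q, φ r ≤ φ p * Real.exp (c * (r - p)) := by
  simp only [← gronwallBound_ε0]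
  refine le_gronwallBound_of_liminf_deriv_right_le
    (fun s _ => (hφ s).continuousAt.continuousWithinAt) (fun s _ b hb => ?_) le_rfl
    fun s hs => (hle s hs).trans_eq (add_zero _).symm
  exact (hφ s).hasDerivWithinAt.liminf_right_slope_le hb

namespace IsRadialSolution

variable {n : ℕ} {G : ℝ → ℝ → ℝ} {u : ℝ → ℝ} {r₀ R δ : ℝ}

theorem continuous (h : IsRadialSolution n G u) : Continuous u :=
  continuous_iff_continuousAt.2 fun r => (h r).continuousAt

theorem continuous_source (h : IsRadialSolution n G u) (hG : Continuous (Function.uncurry G)) :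
    Continuous fun s => G s (u s) :=
  hG.comp (continuous_id.prodMk h.continuous)

theorem monotoneOn (h : IsRadialSolution n G u) (hslope : ∀ r ∈ Ioo 0 R, 0 ≤ radialSlope n G u r) :
    MonotoneOn u (Icc 0 R) := by
  refine monotoneOn_of_hasDerivWithinAt_nonneg (convex_Icc 0 R) h.continuous.continuousOn
    (fun r _ => (h r).hasDerivWithinAt) fun r hr => ?_
  rw [interior_Icc] at hr
  exact mul_nonneg hr.1.le (hslope r hr)

theorem apply_zero_le (h : IsRadialSolution n G u)
    (hslope : ∀ r ∈ Ioo 0 R, 0 ≤ radialSlope n G u r) : ∀ r ∈ Icc 0 R, u 0 ≤ u r := fun _ hr =>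
  h.monotoneOn hslope (left_mem_Icc.2 (hr.1.trans hr.2)) hr hr.1

theorem le_mul_exp (h : IsRadialSolution n G u) (hG : Continuous (Function.uncurry G))
    (hu0 : 0 ≤ u 0) (hGle : ∀ s ∈ Icc 0 R, ∀ x, 0 ≤ x → G s x ≤ x)
    (hslope : ∀ r ∈ Ioo 0 R, 0 ≤ radialSlope n G u r) :
    ∀ r ∈ Icc 0 R, u r ≤ u 0 * Real.exp (R * r) := by
  have hnn : ∀ s ∈ Icc 0 R, 0 ≤ u s := fun s hs => hu0.trans (h.apply_zero_le hslope s hs)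
  have hslope_le : ∀ s ∈ Icc 0 R, radialSlope n G u s ≤ u s := fun s hs =>
    radialMean_le n (h.continuous_source hG) (hnn s hs) fun t ht => by
      have hst : s * t ∈ Icc 0 R :=
        ⟨mul_nonneg hs.1 ht.1, (mul_le_of_le_one_right hs.1 ht.2).trans hs.2⟩
      exact (hGle _ hst _ (hnn _ hst)).trans
        (h.monotoneOn hslope hst hs (mul_le_of_le_one_right hs.1 ht.2))
  have hderiv_le : ∀ s ∈ Ico 0 R, s * radialSlope n G u s ≤ R * u s := fun s hs =>
    (mul_le_mul_of_nonneg_left (hslope_le s (Ico_subset_Icc_self hs)) hs.1).trans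
      (mul_le_mul_of_nonneg_right hs.2.le (hnn s (Ico_subset_Icc_self hs)))
  simpa only [sub_zero] using le_mul_exp_of_deriv_le h hderiv_le

/-- Up to the first zero of the slope `u` increases, hence stays in `(0, δ]`, where `G` is positive;
so there is no such zero. -/
theorem radialSlope_pos (h : IsRadialSolution n G u) (hG : Continuous (Function.uncurry G))
    (hGle : ∀ s ∈ Icc 0 R, ∀ x, 0 ≤ x → G s x ≤ x)
    (hGpos : ∀ s ∈ Icc 0 R, ∀ x ∈ Ioc 0 δ, 0 < G s x)
    (hu0 : 0 < u 0) (hδ : u 0 * Real.exp (R * R) ≤ δ) :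
    ∀ r ∈ Icc 0 R, 0 < radialSlope n G u r := by
  by_contra! hbad
  have hcompact : IsCompact (Icc 0 R ∩ radialSlope n G u ⁻¹' Iic 0) :=
    isCompact_Icc.inter_right
      (isClosed_Iic.preimage (continuous_radialMean n (h.continuous_source hG)))
  obtain ⟨b, ⟨hb, hslope_b⟩, hleast⟩ := hcompact.exists_isLeast hbad
  have hslope : ∀ s ∈ Ioo 0 b, 0 ≤ radialSlope n G u s := fun s hs => by
    by_contra! hneg
    exact hs.2.not_ge (hleast ⟨⟨hs.1.le, hs.2.le.trans hb.2⟩, hneg.le⟩)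
  have hsource : ∀ s ∈ Icc 0 b, 0 < G s (u s) := fun s hs => by
    refine hGpos s ⟨hs.1, hs.2.trans hb.2⟩ _ ⟨hu0.trans_le (h.apply_zero_le hslope s hs), ?_⟩
    calc u s ≤ u 0 * Real.exp (b * s) :=
          h.le_mul_exp hG hu0.le (fun s hs => hGle s ⟨hs.1, hs.2.trans hb.2⟩) hslope s hs
      _ ≤ u 0 * Real.exp (R * R) := by
          gcongr
          exacts [hs.1, hb.1.trans hb.2, hb.2, hs.2.trans hb.2]
      _ ≤ δ := hδ
  refine (radialMean_pos n (h.continuous_source hG) fun t ht => ?_).not_ge hslope_b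
  exact hsource _ ⟨mul_nonneg hb.1 ht.1.le, mul_le_of_le_one_right hb.1 ht.2.le⟩

/-- A strong maximum principle for `u'`: the growth condition on `G` makes `u` constant to the right
of a zero of the slope. -/
theorem radialSlope_eq_zero_of_eq_zero (h : IsRadialSolution n G u)
    (hG : Continuous (Function.uncurry G))
    (hGmono : ∀ ⦃r s x y⦄, r ≤ s → 0 ≤ x → x ≤ y → G s y - G r x ≤ y - x) (hu0 : 0 ≤ u 0)
    (hslope : ∀ r ∈ Icc 0 R, 0 ≤ radialSlope n G u r) (hr₀ : r₀ ∈ Icc 0 R)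
    (hzero : radialSlope n G u r₀ = 0) : radialSlope n G u R = 0 := by
  rcases hr₀.2.eq_or_lt with rfl | hlt
  · exact hzero
  have hslope' : ∀ r ∈ Ioo 0 R, 0 ≤ radialSlope n G u r := fun r hr =>
    hslope r (Ioo_subset_Icc_self hr)
  have hsource : G r₀ (u r₀) = 0 :=
    eq_zero_of_radialMean_eq_zero (g := fun s => G s (u s)) (h.continuous_source hG) hslope'
      ⟨hr₀.1, hlt⟩ hzero
  have hmono : MonotoneOn u (Icc r₀ R) :=
    (h.monotoneOn hslope').mono (Icc_subset_Icc_left hr₀.1)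
  have hderiv_le : ∀ r ∈ Icc r₀ R, r * radialSlope n G u r ≤ R * (u r - u r₀) := fun r hr => by
    have hnn : 0 ≤ u r - u r₀ := sub_nonneg.2 (hmono (left_mem_Icc.2 hlt.le) hr hr.1)
    calc r * radialSlope n G u r ≤ (r - r₀) * (u r - u r₀) := by
          refine mul_radialMean_le_of_radialMean_eq_zero (h.continuous_source hG) hr₀.1 hr.1 hzero
            hnn fun s hs => ?_
          have hsR : s ∈ Icc r₀ R := ⟨hs.1, hs.2.trans hr.2⟩
          have hGs := hGmono hs.1 (hu0.trans (h.apply_zero_le hslope' r₀ hr₀))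
            (hmono (left_mem_Icc.2 hlt.le) hsR hs.1)
          linarith [hmono hsR hr hs.2]
      _ ≤ R * (u r - u r₀) := by
          gcongr
          linarith [hr.2, hr₀.1]
  have hconst : u R - u r₀ ≤ 0 := by
    simpa using le_mul_exp_of_deriv_le (fun s => (h s).sub_const (u r₀))
      (fun s hs => hderiv_le s (Ico_subset_Icc_self hs)) R (right_mem_Icc.2 hlt.le)
  have hR : 0 < R := hr₀.1.trans_lt hlt
  refine le_antisymm (nonpos_of_mul_nonpos_right ?_ hR) (hslope R (right_mem_Icc.2 hR.le))
  exact (hderiv_le R (right_mem_Icc.2 hlt.le)).trans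
    (mul_nonpos_of_nonneg_of_nonpos hR.le hconst)

theorem source_eq_zero_of_const (h : IsRadialSolution n G u) (hG : Continuous (Function.uncurry G))
    (hR : 0 < R) (hconst : ∀ r ∈ Icc 0 R, u r = u 0) : ∀ r ∈ Icc 0 R, G r (u 0) = 0 := by
  have hslope : ∀ r ∈ Ioo 0 R, radialSlope n G u r = 0 := fun r hr => by
    have hloc : u =ᶠ[𝓝 r] fun _ => u 0 := by
      filter_upwards [Icc_mem_nhds hr.1 hr.2] using hconst
    have hderiv := (h r).unique ((hasDerivAt_const r (u 0)).congr_of_eventuallyEq hloc)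
    exact (mul_eq_zero.1 hderiv).resolve_left hr.1.ne'
  have hsource : EqOn (fun r => G r (u 0)) (fun _ => 0) (Ioo 0 R) := fun r hr => by
    have hr0 := eq_zero_of_radialMean_eq_zero (h.continuous_source hG)
      (fun s hs => (hslope s hs).ge) (Ioo_subset_Ico_self hr) (hslope r hr)
    simpa only [hconst r (Ioo_subset_Icc_self hr)] using hr0
  have hclosure := hsource.closure (hG.comp (continuous_id.prodMk continuous_const))
    continuous_const
  rwa [closure_Ioo hR.ne] at hclosure

end IsRadialSolution

theorem exists_mem_Icc_nonneg_and_eq_zero {X : Type*} [TopologicalSpace X] {V : ℝ → X → ℝ}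
    {S : Set X} {p q : ℝ} (hS : IsCompact S) (hV : Continuous (Function.uncurry V)) (hpq : p ≤ q)
    (hp : ∀ x ∈ S, 0 ≤ V p x) (hq : ∃ x ∈ S, V q x ≤ 0) :
    ∃ d ∈ Icc p q, (∀ x ∈ S, 0 ≤ V d x) ∧ ∃ x ∈ S, V d x = 0 := by
  obtain ⟨x₁, hx₁, hVx₁⟩ := hq
  have hcompact (d : ℝ) : IsCompact (V d '' S) :=
    hS.image (hV.comp (continuous_const.prodMk continuous_id))
  have hne (d : ℝ) : (V d '' S).Nonempty := ⟨_, mem_image_of_mem _ hx₁⟩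
  have hinf_p : 0 ≤ sInf (V p '' S) := le_csInf (hne p) (forall_mem_image.2 hp)
  have hinf_q : sInf (V q '' S) ≤ 0 :=
    (csInf_le (hcompact q).bddBelow (mem_image_of_mem _ hx₁)).trans hVx₁
  obtain ⟨d, hd, hinf⟩ :=
    intermediate_value_Icc' hpq (hS.continuous_sInf hV).continuousOn ⟨hinf_q, hinf_p⟩
  refine ⟨d, hd, fun x hx => ?_, ?_⟩
  · exact hinf.ge.trans (csInf_le (hcompact d).bddBelow (mem_image_of_mem _ hx))
  · obtain ⟨x, hx, hVx⟩ := (hcompact d).sInf_mem (hne d)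
    exact ⟨x, hx, hVx.trans hinf⟩

theorem exists_isRadialSolution_neumann (n : ℕ) {G : ℝ → ℝ → ℝ} {L : ℝ≥0} {R δ K : ℝ}
    (hG : Continuous (Function.uncurry G)) (hGL : ∀ s, LipschitzWith L (G s))
    (hG0 : ∀ s, G s 0 = 0)
    (hGmono : ∀ ⦃r s x y⦄, r ≤ s → 0 ≤ x → x ≤ y → G s y - G r x ≤ y - x)
    (hδ : 0 < δ) (hGpos : ∀ s ∈ Icc 0 R, ∀ x ∈ Ioc 0 δ, 0 < G s x)
    (hR : 0 ≤ R) (hK : 0 < K) (hGK : G 0 K ≤ 0) :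
    ∃ u, IsRadialSolution n G u ∧ u 0 ∈ Ioc 0 K ∧
      (∀ r ∈ Icc 0 R, 0 ≤ radialSlope n G u r) ∧ radialSlope n G u R = 0 := by
  obtain ⟨U, hUc, hU⟩ := exists_continuous_isRadialSolution n hG hGL hG0
  choose hsol hU0 using hU
  let V (d : ℝ) : ℝ → ℝ := radialSlope n G (U d)
  have hVc : Continuous (Function.uncurry V) :=
    continuous_uncurry_radialMean n (hG.comp (continuous_snd.prodMk hUc))
  have hGle : ∀ s ∈ Icc 0 R, ∀ x, 0 ≤ x → G s x ≤ x := fun s _ x hx => by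
    simpa only [hG0, sub_zero] using hGmono le_rfl le_rfl hx
  let d₀ : ℝ := min (δ / Real.exp (R * R)) K
  have hd₀ : 0 < d₀ := lt_min (by positivity) hK
  have hsmall : ∀ r ∈ Icc 0 R, 0 < V d₀ r := by
    refine (hsol d₀).radialSlope_pos hG hGle hGpos (by rwa [hU0]) ?_
    rw [hU0, ← le_div_iff₀ (Real.exp_pos _)]
    exact min_le_left _ _
  have hlarge : V K 0 ≤ 0 := by
    simp only [V, radialMean_zero, hU0]
    exact div_nonpos_of_nonpos_of_nonneg hGK (by positivity)
  obtain ⟨d, hd, hnn, r₀, hr₀, hzero⟩ := exists_mem_Icc_nonneg_and_eq_zero isCompact_Icc hVc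
    (min_le_right _ _) (fun r hr => (hsmall r hr).le) ⟨0, left_mem_Icc.2 hR, hlarge⟩
  have hdpos : 0 < d := hd₀.trans_le hd.1
  refine ⟨U d, hsol d, by rw [hU0]; exact ⟨hdpos, hd.2⟩, hnn, ?_⟩
  exact (hsol d).radialSlope_eq_zero_of_eq_zero hG hGmono (by rw [hU0]; exact hdpos.le) hnn hr₀
    hzero

section Extension

theorem exists_continuous_monotone_extension {α β : Type*} [LinearOrder α] [TopologicalSpace α]
    [OrderTopology α] [Preorder β] [TopologicalSpace β] {a : α → β} {p q : α} (hpq : p ≤ q)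
    (ha : ContinuousOn a (Icc p q)) (hmono : MonotoneOn a (Icc p q)) :
    ∃ A : α → β, Continuous A ∧ Monotone A ∧ EqOn A a (Icc p q) ∧ ∀ s, A s ∈ Icc (a p) (a q) := by
  refine ⟨IccExtend hpq ((Icc p q).domRestrict a), continuous_IccExtend_iff.2 ha.domRestrict,
    Monotone.IccExtend hpq fun x y hxy => hmono x.2 y.2 hxy,
    fun x hx => IccExtend_of_mem hpq _ hx, fun s => ?_⟩
  have hs := (projIcc p q hpq s).2
  exact ⟨hmono (left_mem_Icc.2 hpq) hs hs.1, hmono hs (right_mem_Icc.2 hpq) hs.2⟩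

theorem exists_lipschitz_monotone_extension {β : Type*} [PseudoEMetricSpace β] [Preorder β]
    {f : ℝ → β} {ℓ : ℝ≥0} {p q : ℝ} (hpq : p ≤ q) (hf : LipschitzOnWith ℓ f (Icc p q))
    (hmono : MonotoneOn f (Icc p q)) :
    ∃ F : ℝ → β, LipschitzWith ℓ F ∧ Monotone F ∧ EqOn F f (Icc p q) := by
  refine ⟨IccExtend hpq ((Icc p q).domRestrict f), ?_,
    Monotone.IccExtend hpq fun x y hxy => hmono x.2 y.2 hxy,
    fun x hx => IccExtend_of_mem hpq _ hx⟩
  exact (hf.to_restrict.comp (LipschitzWith.projIcc hpq)).weaken (mul_one ℓ).le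

end Extension

section Neumann

variable {A F : ℝ → ℝ} {β ℓ : ℝ≥0} {n : ℕ} {R δ K : ℝ} {u : ℝ → ℝ}

theorem lipschitzWith_sub_const_mul {c : ℝ} (hc : |c| ≤ β) (hF : LipschitzWith ℓ F) :
    LipschitzWith (1 + β * ℓ) fun x => x - c * F x := by
  have hcF : LipschitzWith (β * ℓ) fun x => c * F x :=
    ((lipschitzWith_smul c).comp hF).weaken (by gcongr; exact hc)
  exact LipschitzWith.id.sub hcF

theorem exists_neumann_of_monotone_of_lipschitz (n : ℕ) (hA : Continuous A) (hAmono : Monotone A)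
    (hAβ : ∀ s, A s ∈ Icc 0 (β : ℝ)) (hF : LipschitzWith ℓ F) (hFmono : Monotone F) (hF0 : F 0 = 0)
    (hδ : 0 < δ) (hFδ : ∀ x ∈ Ioc 0 δ, β * F x < x) (hR : 0 ≤ R) (hK : 0 < K)
    (hAK : K ≤ A 0 * F K) :
    ∃ u, IsRadialSolution n (fun s x => x - A s * F x) u ∧ 0 < u 0 ∧
      (∀ r ∈ Icc 0 R, 0 ≤ radialSlope n (fun s x => x - A s * F x) u r) ∧
      radialSlope n (fun s x => x - A s * F x) u R = 0 ∧
      ∀ r ∈ Icc 0 R, u r ≤ K * Real.exp (R * R) := by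
  have hFnn : ∀ x, 0 ≤ x → 0 ≤ F x := fun x hx => hF0.symm.trans_le (hFmono hx)
  have hG : Continuous (Function.uncurry fun s x => x - A s * F x) :=
    continuous_snd.sub ((hA.comp continuous_fst).mul (hF.continuous.comp continuous_snd))
  have hGL (s : ℝ) : LipschitzWith (1 + β * ℓ) fun x => x - A s * F x :=
    lipschitzWith_sub_const_mul ((abs_of_nonneg (hAβ s).1).trans_le (hAβ s).2) hF
  have hGmono : ∀ ⦃r s x y⦄, r ≤ s → 0 ≤ x → x ≤ y →
      (y - A s * F y) - (x - A r * F x) ≤ y - x := fun r s x y hrs hx hxy => by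
    linarith [mul_le_mul (hAmono hrs) (hFmono hxy) (hFnn x hx) (hAβ s).1]
  have hGpos : ∀ s ∈ Icc 0 R, ∀ x ∈ Ioc 0 δ, 0 < x - A s * F x := fun s _ x hx => by
    linarith [mul_le_mul_of_nonneg_right (hAβ s).2 (hFnn x hx.1.le), hFδ x hx]
  obtain ⟨u, hu, hu0, hslope, hslopeR⟩ := exists_isRadialSolution_neumann n hG hGL
    (fun s => by rw [hF0, mul_zero, sub_zero]) hGmono hδ hGpos hR hK (sub_nonpos.2 hAK)
  refine ⟨u, hu, hu0.1, hslope, hslopeR, fun r hr => ?_⟩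
  have hGle : ∀ s ∈ Icc 0 R, ∀ x, 0 ≤ x → x - A s * F x ≤ x := fun s _ x hx =>
    sub_le_self x (mul_nonneg (hAβ s).1 (hFnn x hx))
  calc u r ≤ u 0 * Real.exp (R * r) := hu.le_mul_exp hG hu0.1.le hGle
        (fun s hs => hslope s (Ioo_subset_Icc_self hs)) r hr
    _ ≤ K * Real.exp (R * R) := by
        gcongr
        exacts [hu0.2, hr.2]

theorem IsRadialSolution.exists_ne_of_weight_ne
    (hu : IsRadialSolution n (fun s x => x - A s * F x) u) (hA : Continuous A) (hF : Continuous F)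
    (hu0 : u 0 ≠ 0) (hR : 0 < R) (hne : ∃ r ∈ Icc 0 R, ∃ s ∈ Icc 0 R, A r ≠ A s) :
    ∃ r ∈ Icc 0 R, ∃ s ∈ Icc 0 R, u r ≠ u s := by
  by_contra! hconst
  obtain ⟨r, hr, s, hs, hrs⟩ := hne
  have hG : Continuous (Function.uncurry fun s x => x - A s * F x) :=
    continuous_snd.sub ((hA.comp continuous_fst).mul (hF.comp continuous_snd))
  have hsource : ∀ t ∈ Icc 0 R, A t * F (u 0) = u 0 := fun t ht =>
    (sub_eq_zero.1 (hu.source_eq_zero_of_const hG hR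
      (fun t ht => hconst t ht 0 (left_mem_Icc.2 hR.le)) t ht)).symm
  have hF0 : F (u 0) ≠ 0 := right_ne_zero_of_mul ((hsource r hr).trans_ne hu0)
  exact hrs (mul_right_cancel₀ hF0 ((hsource r hr).trans (hsource s hs).symm))

end Neumann

theorem exists_pos_le_mul_of_lt_liminf_div {f : ℝ → ℝ} {α : ℝ} (hα : 0 < α)
    (hf : ((1 / α : ℝ) : EReal) < liminf (fun s : ℝ => ((f s / s : ℝ) : EReal)) atTop) :
    ∃ K > 0, K ≤ α * f K := by
  obtain ⟨K, hlt, hK⟩ := ((eventually_lt_of_lt_liminf hf).and (eventually_gt_atTop 0)).exists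
  rw [EReal.coe_lt_coe_iff, div_lt_div_iff₀ hα hK, one_mul, mul_comm] at hlt
  exact ⟨K, hK, hlt.le⟩

theorem eventually_mul_lt_of_derivWithin_eq_zero {f : ℝ → ℝ} (β : ℝ)
    (hf : DifferentiableWithinAt ℝ f (Ici 0) 0) (hf0 : f 0 = 0)
    (hf'0 : derivWithin f (Ici 0) 0 = 0) : ∀ᶠ x in 𝓝[>] 0, β * f x < x := by
  have hderiv : HasDerivWithinAt (fun x => β * f x) 0 (Ioi 0) 0 := by
    simpa only [hf'0, mul_zero] using (hf.hasDerivWithinAt.const_mul β).mono Ioi_subset_Ici_self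
  have hslope := (hasDerivWithinAt_iff_tendsto_slope' self_notMem_Ioi).1 hderiv
  filter_upwards [hslope.eventually_lt_const one_pos, self_mem_nhdsWithin] with x hx hx0
  rwa [slope_def_field, hf0, mul_zero, sub_zero, sub_zero, div_lt_one hx0] at hx

theorem exists_isRadialSolution_neumann_of_locallyLipschitzOn (n : ℕ) {a f : ℝ → ℝ} {R : ℝ}
    (hR : 0 ≤ R) (ha : ContinuousOn a (Icc 0 R)) (ha_mono : MonotoneOn a (Icc 0 R))
    (hf : LocallyLipschitzOn (Ici 0) f) (hf_mono : MonotoneOn f (Ici 0)) (hf0 : f 0 = 0)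
    (hf_small : ∀ᶠ x in 𝓝[>] 0, a R * f x < x) (hf_large : ∃ K > 0, K ≤ a 0 * f K) :
    ∃ A F u : ℝ → ℝ, Continuous A ∧ Continuous F ∧
      IsRadialSolution n (fun s x => x - A s * F x) u ∧ 0 < u 0 ∧
      (∀ r ∈ Icc 0 R, 0 ≤ radialSlope n (fun s x => x - A s * F x) u r) ∧
      radialSlope n (fun s x => x - A s * F x) u R = 0 ∧
      EqOn A a (Icc 0 R) ∧ ∀ r ∈ Icc 0 R, F (u r) = f (u r) := by
  obtain ⟨K, hK, hfK⟩ := hf_large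
  obtain ⟨δ, hδ, hfδ⟩ := mem_nhdsGT_iff_exists_Ioc_subset.1 hf_small
  have hfK0 : 0 ≤ f K := hf0.symm.trans_le (hf_mono self_mem_Ici hK.le hK.le)
  have ha0 : 0 ≤ a 0 := (pos_of_mul_pos_left (hK.trans_le hfK) hfK0).le
  have haR : 0 ≤ a R :=
    ha0.trans (ha_mono (left_mem_Icc.2 hR) (right_mem_Icc.2 hR) hR)
  let M : ℝ := K * Real.exp (R * R)
  have hKM : K ≤ M := le_mul_of_one_le_right hK.le (Real.one_le_exp (by positivity))
  have hM : 0 < M := hK.trans_le hKM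
  obtain ⟨A, hA, hAmono, hAa, hAmem⟩ := exists_continuous_monotone_extension hR ha ha_mono
  obtain ⟨ℓ, hℓ⟩ :=
    (hf.mono Icc_subset_Ici_self).exists_lipschitzOnWith_of_compact (isCompact_Icc (b := M))
  obtain ⟨F, hF, hFmono, hFf⟩ :=
    exists_lipschitz_monotone_extension hM.le hℓ (hf_mono.mono Icc_subset_Ici_self)
  obtain ⟨u, hu, hu0, hslope, hslopeR, hule⟩ := exists_neumann_of_monotone_of_lipschitz
    (β := ⟨a R, haR⟩) (δ := min δ M) n hA hAmono (fun s => ⟨ha0.trans (hAmem s).1, (hAmem s).2⟩)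
    hF hFmono ((hFf (left_mem_Icc.2 hM.le)).trans hf0) (lt_min hδ hM)
    (fun x hx => by
      rw [hFf ⟨hx.1.le, hx.2.trans (min_le_right _ _)⟩]
      exact hfδ ⟨hx.1, hx.2.trans (min_le_left _ _)⟩)
    hR hK (by rwa [hAa (left_mem_Icc.2 hR), hFf ⟨hK.le, hKM⟩])
  refine ⟨A, F, u, hA, hF.continuous, hu, hu0, hslope, hslopeR, hAa,
    fun r hr => hFf ⟨?_, hule r hr⟩⟩
  exact hu0.le.trans (hu.apply_zero_le (fun s hs => hslope s (Ioo_subset_Icc_self hs)) r hr)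

theorem stmt_0_general {N : ℕ} (hN : 1 ≤ N) {a f : ℝ → ℝ} {R : ℝ} (hR : 0 < R)
    (ha : ContinuousOn a (Icc 0 R)) (ha_mono : MonotoneOn a (Icc 0 R))
    (ha_nonconst : ∃ r ∈ Icc 0 R, ∃ s ∈ Icc 0 R, a r ≠ a s)
    (hf : LocallyLipschitzOn (Ici 0) f) (hf_mono : MonotoneOn f (Ici 0)) (hf0 : f 0 = 0)
    (hf_small : ∀ᶠ x in 𝓝[>] 0, a R * f x < x) (hf_large : ∃ K > 0, K ≤ a 0 * f K) :
    ∃ u u' u'' : ℝ → ℝ,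
      (∀ r ∈ Icc 0 R, HasDerivWithinAt u (u' r) (Icc 0 R) r) ∧
      ContinuousOn u' (Icc 0 R) ∧
      (∀ r ∈ Ioo 0 R, HasDerivAt u' (u'' r) r) ∧
      u' 0 = 0 ∧ u' R = 0 ∧
      (∀ r ∈ Icc 0 R, 0 < u r) ∧
      MonotoneOn u (Icc 0 R) ∧
      (∃ r ∈ Icc 0 R, ∃ s ∈ Icc 0 R, u r ≠ u s) ∧
      (∀ r ∈ Ioo 0 R, -u'' r - ((N : ℝ) - 1) / r * u' r + u r = a r * f (u r)) := by
  obtain ⟨n, rfl⟩ := Nat.exists_eq_add_of_le' hN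
  obtain ⟨A, F, u, hA, hF, hu, hu0, hslope, hslopeR, hAa, hFf⟩ :=
    exists_isRadialSolution_neumann_of_locallyLipschitzOn n hR.le ha ha_mono hf hf_mono hf0 hf_small
      hf_large
  have hsource : Continuous fun s => u s - A s * F (u s) :=
    hu.continuous.sub (hA.mul (hF.comp hu.continuous))
  have hslope' := fun r (hr : r ∈ Ioo 0 R) => hslope r (Ioo_subset_Icc_self hr)
  let u' (r : ℝ) : ℝ := r * radialMean n (fun s => u s - A s * F (u s)) r
  refine ⟨u, u', fun r => u r - A r * F (u r) - n / r * u' r, fun r _ => (hu r).hasDerivWithinAt,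
    (continuous_id.mul (continuous_radialMean n hsource)).continuousOn,
    fun r hr => hasDerivAt_mul_radialMean n hsource hr.1.ne', zero_mul _,
    mul_eq_zero_of_right R hslopeR, fun r hr => hu0.trans_le (hu.apply_zero_le hslope' r hr),
    hu.monotoneOn hslope', hu.exists_ne_of_weight_ne hA hF hu0.ne' hR ?_, fun r hr => ?_⟩
  · obtain ⟨r, hr, s, hs, hrs⟩ := ha_nonconst
    exact ⟨r, hr, s, hs, by rwa [hAa hr, hAa hs]⟩
  · rw [← hAa (Ioo_subset_Icc_self hr), ← hFf r (Ioo_subset_Icc_self hr)]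
    push_cast
    ring

/-- Existence of a nonconstant nondecreasing positive radial solution of the Neumann
problem `-Δu + u = a(|x|) f(u)` in the unit ball, written in radial coordinates. -/
theorem stmt_0 (N : ℕ) (hN : 2 ≤ N) (a f : ℝ → ℝ)
    (ha_diff : ContDiffOn ℝ 1 a (Icc 0 1))
    (ha_mono : MonotoneOn a (Icc 0 1))
    (ha_nonconst : ∃ r ∈ Icc (0:ℝ) 1, ∃ s ∈ Icc (0:ℝ) 1, a r ≠ a s)
    (ha0 : 0 < a 0)
    (hf_diff : ContDiffOn ℝ 1 f (Ici 0))
    (hf_mono : MonotoneOn f (Ici 0))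
    (hf0 : f 0 = 0)
    (hf'0 : derivWithin f (Ici 0) 0 = 0)
    (hf_liminf : ((1 / a 0 : ℝ) : EReal) <
      Filter.liminf (fun s : ℝ => ((f s / s : ℝ) : EReal)) Filter.atTop) :
    ∃ u u' u'' : ℝ → ℝ,
      (∀ r ∈ Icc (0:ℝ) 1, HasDerivWithinAt u (u' r) (Icc 0 1) r) ∧
      ContinuousOn u' (Icc 0 1) ∧
      (∀ r ∈ Ioo (0:ℝ) 1, HasDerivAt u' (u'' r) r) ∧
      u' 0 = 0 ∧ u' 1 = 0 ∧
      (∀ r ∈ Icc (0:ℝ) 1, 0 < u r) ∧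
      MonotoneOn u (Icc 0 1) ∧
      (∃ r ∈ Icc (0:ℝ) 1, ∃ s ∈ Icc (0:ℝ) 1, u r ≠ u s) ∧
      (∀ r ∈ Ioo (0:ℝ) 1,
        -u'' r - ((N : ℝ) - 1) / r * u' r + u r = a r * f (u r)) :=
  stmt_0_general (one_le_two.trans hN) one_pos ha_diff.continuousOn ha_mono ha_nonconst
    (hf_diff.locallyLipschitzOn (convex_Ici 0)) hf_mono hf0
    (eventually_mul_lt_of_derivWithin_eq_zero (a 1)
      (hf_diff.differentiableOn one_ne_zero 0 self_mem_Ici) hf0 hf'0)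
    (exists_pos_le_mul_of_lt_liminf_div ha0 hf_liminf)
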